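/- Enriched Adjoint Triangle Theorem: Let (L ⊣ U, η, ε): 𝔅 → ℭ and (E ⊣ R, ρ, μ): 𝔄 → ℭ be V-adjunctions and J: 𝔄 → 𝔅 a V-functor with L∘J = E. Assume that for each pair of objects (A ∈ 𝔄, Y ∈ 𝔅) the diagram 𝔅(JA, Y) → ℭ(EA, LY) ⇉ ℭ(EA, LULY), whose first arrow is L_{JA,Y} and whose parallel pair consists of ℭ(EA, L(η_Y)) and L_{JA,ULY}∘χ_{(JA,LY)}, is an equalizer in V. Then J has a right V-adjoint G if and only if for each object Y of 𝔅 the V-equalizer of the pair RL(U(μ_{LY})η_{JRLY})ρ_{RLY}, RL(η_Y): RLY ⇉ RLULY exists in 𝔄; in that case GY is given by this V-equalizer. -/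

import Mathlib

/-! Enriched adjoint triangles (Section 1 of "On Biadjoint Triangles", Lucatelli Nunes). -/

open CategoryTheory MonoidalCategory Limits

universe v u u₁ u₂ u₃

namespace EnrichedAdjointTriangles

variable (V : Type u) [Category.{v} V] [MonoidalCategory V] [SymmetricCategory V]
  [MonoidalClosed V] [HasLimits V] [HasColimits V]

section Defs
variable {C : Type u₁} [EnrichedCategory V C]

/-- A generalized element of the `V`-object of morphisms, i.e. a morphism of the
underlying category. -/
abbrev EHom (a b : C) : Type v := (𝟙_ V) ⟶ (a ⟶[V] b)

/-- Composition of generalized elements. -/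
def vcomp {a b c : C} (f : EHom V a b) (g : EHom V b c) : EHom V a c :=
  (λ_ (𝟙_ V)).inv ≫ (f ⊗ₘ g) ≫ eComp V a b c

/-- Post-composition with a generalized element, as a morphism of `V`. -/
def postcompV (W : C) {a b : C} (e : EHom V a b) : ((W ⟶[V] a) : V) ⟶ (W ⟶[V] b) :=
  (ρ_ _).inv ≫ (𝟙 _ ⊗ₘ e) ≫ eComp V W a b

/-- Pre-composition with a generalized element, as a morphism of `V`. -/
def precompV {a b : C} (e : EHom V a b) (c : C) : ((b ⟶[V] c) : V) ⟶ (a ⟶[V] c) :=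
  (λ_ _).inv ≫ (e ⊗ₘ 𝟙 _) ≫ eComp V a b c

/-- `(e, i)` is a conical `V`-equalizer of the pair of morphisms `q, r : a ⟶ b`:
each `V`-valued hom-functor takes it to an equalizer diagram in `V`. -/
structure IsVEqualizer {a b : C} (q r : EHom V a b) (e : C) (i : EHom V e a) : Prop where
  w : ∀ W : C, postcompV V W i ≫ postcompV V W q = postcompV V W i ≫ postcompV V W r
  isLimit : ∀ W : C, Nonempty (IsLimit (Fork.ofι (postcompV V W i) (w W)))

/-- The conical `V`-equalizer of `q` and `r` exists. -/
def HasVEqualizer {a b : C} (q r : EHom V a b) : Prop :=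
  ∃ (e : C) (i : EHom V e a), IsVEqualizer V q r e i

end Defs

section Nat
variable {B : Type u₁} [EnrichedCategory V B] {C : Type u₂} [EnrichedCategory V C]

/-- A `V`-natural transformation between `V`-functors. -/
structure VNat (F G : EnrichedFunctor V B C) where
  app : ∀ X : B, EHom V (F.obj X) (G.obj X)
  naturality :
    ∀ X Y : B,
      (ρ_ _).inv ≫ (F.map X Y ⊗ₘ app Y) ≫ eComp V (F.obj X) (F.obj Y) (G.obj Y) =
        (λ_ _).inv ≫ (app X ⊗ₘ G.map X Y) ≫ eComp V (F.obj X) (G.obj X) (G.obj Y)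

/-- A `V`-adjunction `(L ⊣ U, η, ε)`, given by unit and counit `V`-natural
transformations satisfying the triangle identities. -/
structure VAdjunction (L : EnrichedFunctor V B C) (U : EnrichedFunctor V C B) where
  η : VNat V (EnrichedFunctor.id V B) (EnrichedFunctor.comp V L U)
  ε : VNat V (EnrichedFunctor.comp V U L) (EnrichedFunctor.id V C)
  left_triangle :
    ∀ X : B,
      vcomp V (η.app X ≫ L.map X (U.obj (L.obj X))) (ε.app (L.obj X)) = eId V (L.obj X)
  right_triangle :
    ∀ Y : C,
      vcomp V (η.app (U.obj Y)) (ε.app Y ≫ U.map (L.obj (U.obj Y)) Y) = eId V (U.obj Y)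

end Nat

section Triangle

variable {A : Type u₁} [EnrichedCategory V A] {B : Type u₂} [EnrichedCategory V B]
  {C : Type u₃} [EnrichedCategory V C]
  (J : EnrichedFunctor V A B) (L : EnrichedFunctor V B C) (R : EnrichedFunctor V C A)
  (U : EnrichedFunctor V C B)
  (adj1 : VAdjunction V (EnrichedFunctor.comp V J L) R) (adj2 : VAdjunction V L U)

/-- The generalized element `L(η_Y) : LY ⟶ LULY`. -/
def Lη (Y : B) : EHom V (L.obj Y) (L.obj (U.obj (L.obj Y))) :=
  adj2.η.app Y ≫ L.map Y (U.obj (L.obj Y))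

/-- `ℭ(EA, L(η_Y))`, the first leg of the parallel pair. -/
def parallelFst (A' : A) (Y : B) :
    ((L.obj (J.obj A') ⟶[V] L.obj Y) : V) ⟶
      (L.obj (J.obj A') ⟶[V] L.obj (U.obj (L.obj Y))) :=
  postcompV V (L.obj (J.obj A')) (Lη V L U adj2 Y)

/-- `L_{JA, ULY} ∘ χ_{(JA, LY)}`, the second leg of the parallel pair:
`f ↦ L(U(f) ∘ η_{JA})`. -/
def parallelSnd (A' : A) (Y : B) :
    ((L.obj (J.obj A') ⟶[V] L.obj Y) : V) ⟶
      (L.obj (J.obj A') ⟶[V] L.obj (U.obj (L.obj Y))) :=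
  U.map (L.obj (J.obj A')) (L.obj Y) ≫
    precompV V (adj2.η.app (J.obj A')) (U.obj (L.obj Y)) ≫
    L.map (J.obj A') (U.obj (L.obj Y))

/-- The generalized element `q_Y = RL(η_Y) : RLY ⟶ RLULY`. -/
def qY (Y : B) :
    EHom V (R.obj (L.obj Y)) (R.obj (L.obj (U.obj (L.obj Y)))) :=
  Lη V L U adj2 Y ≫ R.map (L.obj Y) (L.obj (U.obj (L.obj Y)))

/-- The generalized element `r_Y = RL(U(μ_{LY}) ∘ η_{JRLY}) ∘ ρ_{RLY} : RLY ⟶ RLULY`. -/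
def rY (Y : B) :
    EHom V (R.obj (L.obj Y)) (R.obj (L.obj (U.obj (L.obj Y)))) :=
  vcomp V (adj1.η.app (R.obj (L.obj Y)))
    (vcomp V (adj2.η.app (J.obj (R.obj (L.obj Y))))
        (adj1.ε.app (L.obj Y) ≫
          U.map (L.obj (J.obj (R.obj (L.obj Y)))) (L.obj Y)) ≫
      L.map (J.obj (R.obj (L.obj Y))) (U.obj (L.obj Y)) ≫
      R.map (L.obj (J.obj (R.obj (L.obj Y)))) (L.obj (U.obj (L.obj Y))))

/-- `L` is `V`-precomonadic: for every `Y`, the diagram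
`Y → ULY ⇉ ULULY` is a conical `V`-equalizer. -/
def VPrecomonadic : Prop :=
  ∀ Y : B,
    IsVEqualizer V (adj2.η.app (U.obj (L.obj Y)))
      (Lη V L U adj2 Y ≫ U.map (L.obj Y) (L.obj (U.obj (L.obj Y))))
      Y (adj2.η.app Y)

end Triangle

end EnrichedAdjointTriangles
namespace EnrichedAdjointTriangles

section Calculus

variable {V : Type u} [Category.{v} V] [MonoidalCategory V]
variable {C : Type u₁} [EnrichedCategory V C]

lemma post_eq (W : C) {a b : C} (e : EHom V a b) :
    postcompV V W e = (ρ_ _).inv ≫ (_ ◁ e) ≫ eComp V W a b := by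
  simp [postcompV, id_tensorHom]

lemma pre_eq {a b : C} (e : EHom V a b) (c : C) :
    precompV V e c = (λ_ _).inv ≫ (e ▷ _) ≫ eComp V a b c := by
  simp [precompV, tensorHom_id]

lemma elem_post {a b c : C} (f : EHom V a b) (g : EHom V b c) :
    f ≫ postcompV V a g = vcomp V f g := by
  rw [post_eq, vcomp, rightUnitor_inv_naturality_assoc, MonoidalCategory.tensorHom_def_assoc,
    unitors_inv_equal]

lemma elem_pre {a b c : C} (f : EHom V a b) (g : EHom V b c) :
    g ≫ precompV V f c = vcomp V f g := by
  rw [pre_eq, vcomp, leftUnitor_inv_naturality_assoc, tensorHom_def'_assoc]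

lemma post_id (W a : C) : postcompV V W (eId V a) = 𝟙 _ := by
  rw [post_eq]; exact e_comp_id V W a

lemma pre_id (a c : C) : precompV V (eId V a) c = 𝟙 _ := by
  rw [pre_eq]; exact e_id_comp V a c

/-- T1 -/
lemma comp_post (W : C) {x a b : C} (f : EHom V a b) :
    eComp V W x a ≫ postcompV V W f = (_ ◁ postcompV V x f) ≫ eComp V W x b := by
  rw [post_eq, post_eq, rightUnitor_inv_naturality_assoc, ← whisker_exchange_assoc]
  simp only [whiskerLeft_comp, Category.assoc]
  rw [← e_assoc]
  simp

/-- T2 -/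
lemma comp_pre {a b x c : C} (f : EHom V a b) :
    eComp V b x c ≫ precompV V f c = (precompV V f x ▷ _) ≫ eComp V a x c := by
  rw [pre_eq, pre_eq, leftUnitor_inv_naturality_assoc, whisker_exchange_assoc]
  simp only [comp_whiskerRight, Category.assoc]
  rw [← e_assoc']
  simp

/-- T3 -/
lemma pre_post_comp (W : C) {a b c : C} (f : EHom V a b) :
    (_ ◁ precompV V f c) ≫ eComp V W a c = (postcompV V W f ▷ _) ≫ eComp V W b c := by
  rw [post_eq, pre_eq]
  simp only [comp_whiskerRight, whiskerLeft_comp, Category.assoc]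
  rw [← e_assoc']
  simp

lemma post_comp (W : C) {a b c : C} (f : EHom V a b) (g : EHom V b c) :
    postcompV V W (vcomp V f g) = postcompV V W f ≫ postcompV V W g := by
  rw [← elem_post, post_eq W f, post_eq W (f ≫ _)]
  simp only [Category.assoc, whiskerLeft_comp]
  rw [comp_post]

lemma pre_comp {a b c : C} (f : EHom V a b) (g : EHom V b c) (d : C) :
    precompV V (vcomp V f g) d = precompV V g d ≫ precompV V f d := by
  rw [← elem_pre, pre_eq g, pre_eq (g ≫ _)]
  simp only [Category.assoc, comp_whiskerRight]
  rw [comp_pre]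

lemma pre_post {a b c d : C} (f : EHom V a b) (g : EHom V c d) :
    precompV V f c ≫ postcompV V a g = postcompV V b g ≫ precompV V f d := by
  rw [pre_eq f c]
  simp only [Category.assoc]
  rw [comp_post, ← whisker_exchange_assoc, ← leftUnitor_inv_naturality_assoc, pre_eq]

lemma vcomp_assoc {a b c d : C} (f : EHom V a b) (g : EHom V b c) (h : EHom V c d) :
    vcomp V (vcomp V f g) h = vcomp V f (vcomp V g h) := by
  rw [← elem_post f (vcomp V g h), post_comp, ← elem_post (vcomp V f g), ← elem_post f,
    Category.assoc]

lemma id_vcomp {a b : C} (f : EHom V a b) : vcomp V (eId V a) f = f := by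
  rw [← elem_pre, pre_id, Category.comp_id]

lemma vcomp_id {a b : C} (f : EHom V a b) : vcomp V f (eId V b) = f := by
  rw [← elem_post, post_id, Category.comp_id]

variable {D : Type u₂} [EnrichedCategory V D]

lemma map_post (F : EnrichedFunctor V C D) (W : C) {a b : C} (g : EHom V a b) :
    F.map W a ≫ postcompV V (F.obj W) (g ≫ F.map a b) = postcompV V W g ≫ F.map W b := by
  rw [post_eq, post_eq]
  simp only [Category.assoc, F.map_comp, whiskerLeft_comp, MonoidalCategory.tensorHom_def]
  rw [rightUnitor_inv_naturality_assoc, ← whisker_exchange_assoc, ← whisker_exchange_assoc]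

lemma map_pre (F : EnrichedFunctor V C D) {a b : C} (g : EHom V a b) (W : C) :
    F.map b W ≫ precompV V (g ≫ F.map a b) (F.obj W) = precompV V g W ≫ F.map a W := by
  rw [pre_eq, pre_eq]
  simp only [Category.assoc, F.map_comp, comp_whiskerRight, tensorHom_def']
  rw [leftUnitor_inv_naturality_assoc, whisker_exchange_assoc, whisker_exchange_assoc]

lemma map_vcomp (F : EnrichedFunctor V C D) {a b c : C} (f : EHom V a b) (g : EHom V b c) :
    vcomp V f g ≫ F.map a c = vcomp V (f ≫ F.map a b) (g ≫ F.map b c) := by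
  rw [← elem_post, ← elem_post, Category.assoc, Category.assoc, map_post]

lemma nat_iff {FX FY GX GY : D} {M : V} (s : M ⟶ (FX ⟶[V] FY)) (t : M ⟶ (GX ⟶[V] GY))
    (x : EHom V FX GX) (y : EHom V FY GY) :
    ((ρ_ _).inv ≫ (s ⊗ₘ y) ≫ eComp V FX FY GY = (λ_ _).inv ≫ (x ⊗ₘ t) ≫ eComp V FX GX GY) ↔
      s ≫ postcompV V FX y = t ≫ precompV V x GY := by
  rw [post_eq, pre_eq, rightUnitor_inv_naturality_assoc, leftUnitor_inv_naturality_assoc,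
    tensorHom_def_assoc, tensorHom_def'_assoc]

end Calculus

section Adj

variable {V : Type u} [Category.{v} V] [MonoidalCategory V]
variable {A : Type u₁} [EnrichedCategory V A] {B : Type u₂} [EnrichedCategory V B]

variable {L : EnrichedFunctor V A B} {U : EnrichedFunctor V B A}

/-- The unit, with unfolded types. -/
def un (adj : VAdjunction V L U) (X : A) : EHom V X (U.obj (L.obj X)) := adj.η.app X

/-- The counit, with unfolded types. -/
def co (adj : VAdjunction V L U) (Z : B) : EHom V (L.obj (U.obj Z)) Z := adj.ε.app Z

lemma un_co (adj : VAdjunction V L U) (X : A) :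
    vcomp V (un adj X ≫ L.map X (U.obj (L.obj X))) (co adj (L.obj X)) = eId V (L.obj X) :=
  adj.left_triangle X

lemma co_un (adj : VAdjunction V L U) (Z : B) :
    vcomp V (un adj (U.obj Z)) (co adj Z ≫ U.map (L.obj (U.obj Z)) Z) = eId V (U.obj Z) :=
  adj.right_triangle Z

lemma η_nat (adj : VAdjunction V L U) (X Y : A) :
    postcompV V X (un adj Y) =
      L.map X Y ≫ U.map (L.obj X) (L.obj Y) ≫
        precompV V (un adj X) (U.obj (L.obj Y)) := by
  have := (nat_iff _ _ _ _).1 (adj.η.naturality X Y)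
  exact (Category.id_comp _).symm.trans (this.trans (Category.assoc _ _ _))

lemma ε_nat (adj : VAdjunction V L U) (X Y : B) :
    U.map X Y ≫ L.map (U.obj X) (U.obj Y) ≫
        postcompV V (L.obj (U.obj X)) (co adj Y) =
      precompV V (co adj X) Y := by
  have := (nat_iff _ _ _ _).1 (adj.ε.naturality X Y)
  exact (Category.assoc _ _ _).symm.trans (this.trans (Category.id_comp _))

/-- The hom-object isomorphism of a `V`-adjunction: `f ↦ ε ∘ L f`. -/
def θ (adj : VAdjunction V L U) (X : A) (Z : B) :
    ((X ⟶[V] U.obj Z) : V) ≅ (L.obj X ⟶[V] Z) where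
  hom := L.map X (U.obj Z) ≫
    postcompV V (L.obj X) (co adj Z)
  inv := U.map (L.obj X) Z ≫ precompV V (un adj X) (U.obj Z)
  hom_inv_id := by
    rw [Category.assoc, ← Category.assoc (postcompV _ _ _), ← map_post, Category.assoc,
      ← pre_post, ← Category.assoc (U.map _ _), ← Category.assoc (L.map _ _), ← η_nat,
      ← post_comp, co_un, post_id]
  inv_hom_id := by
    rw [Category.assoc, ← Category.assoc (precompV _ _ _), ← map_pre, Category.assoc,
      pre_post, ← Category.assoc (L.map _ _), ← Category.assoc (U.map _ _), ε_nat,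
      ← pre_comp, un_co, pre_id]

lemma θ_hom (adj : VAdjunction V L U) (X : A) (Z : B) :
    (θ adj X Z).hom = L.map X (U.obj Z) ≫
      postcompV V (L.obj X) (co adj Z) := rfl

lemma post_θ (adj : VAdjunction V L U) (X : A) {Z Z' : B} (w : EHom V Z Z') :
    postcompV V X (w ≫ U.map Z Z') ≫ (θ adj X Z').hom =
      (θ adj X Z).hom ≫ postcompV V (L.obj X) w := by
  rw [θ_hom, θ_hom, ← Category.assoc, ← map_post, Category.assoc, Category.assoc, ← post_comp,
    ← elem_post, Category.assoc, Category.assoc, ε_nat, elem_pre, post_comp, Category.assoc]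

lemma post_η_θ (adj : VAdjunction V L U) (W X : A) :
    postcompV V W (un adj X) ≫ (θ adj W (L.obj X)).hom =
      L.map W X := by
  rw [θ_hom, ← Category.assoc, ← map_post, Category.assoc, ← post_comp, un_co, post_id,
    Category.comp_id]

lemma post_η_comp_θ (adj : VAdjunction V L U) (W X : A) {Z : B} (w : EHom V (L.obj X) Z) :
    postcompV V W (vcomp V (un adj X)
        (w ≫ U.map (L.obj X) Z)) ≫ (θ adj W Z).hom =
      L.map W X ≫ postcompV V (L.obj W) w := by
  rw [post_comp, Category.assoc, post_θ, ← Category.assoc, post_η_θ]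

/-- A family of universal arrows yields a right `V`-adjoint. -/
theorem exists_right_adjoint (J : EnrichedFunctor V A B) (G : B → A)
    (e : ∀ Y, EHom V (J.obj (G Y)) Y)
    (h : ∀ X Y, IsIso (J.map X (G Y) ≫ postcompV V (J.obj X) (e Y))) :
    ∃ G : EnrichedFunctor V B A, Nonempty (VAdjunction V J G) := by
  let Gm : ∀ Y Z, ((Y ⟶[V] Z) : V) ⟶ (G Y ⟶[V] G Z) := fun Y Z =>
    precompV V (e Y) Z ≫ inv (J.map (G Y) (G Z) ≫ postcompV V (J.obj (G Y)) (e Z))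
  have hG : ∀ Y Z, Gm Y Z ≫ J.map (G Y) (G Z) ≫ postcompV V (J.obj (G Y)) (e Z) =
      precompV V (e Y) Z := fun Y Z => by simp only [Gm, Category.assoc, IsIso.inv_hom_id,
        Category.comp_id]
  let n : ∀ X, EHom V X (G (J.obj X)) := fun X =>
    eId V (J.obj X) ≫ inv (J.map X (G (J.obj X)) ≫ postcompV V (J.obj X) (e (J.obj X)))
  have hn : ∀ X, n X ≫ J.map X (G (J.obj X)) ≫ postcompV V (J.obj X) (e (J.obj X)) =
      eId V (J.obj X) := fun X => by simp only [n, Category.assoc, IsIso.inv_hom_id,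
        Category.comp_id]
  clear_value Gm n
  have hn' : ∀ X, vcomp V (n X ≫ J.map X (G (J.obj X))) (e (J.obj X)) = eId V (J.obj X) :=
    fun X => by rw [← elem_post, Category.assoc, hn]
  have canc : ∀ {X Y} {M : V} (f g : M ⟶ (X ⟶[V] G Y)),
      f ≫ J.map X (G Y) ≫ postcompV V (J.obj X) (e Y) =
        g ≫ J.map X (G Y) ≫ postcompV V (J.obj X) (e Y) → f = g := by
    intro X Y M f g hfg
    have := h X Y
    exact (cancel_mono _).1 hfg
  let GF : EnrichedFunctor V B A :=
    { obj := G
      map := Gm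
      map_id := fun Y => by
        apply canc
        rw [Category.assoc, hG, elem_pre, vcomp_id, ← Category.assoc, J.map_id, elem_post,
          id_vcomp]
      map_comp := fun Y Z W => by
        apply canc
        rw [Category.assoc, hG, comp_pre, Category.assoc, ← Category.assoc (eComp _ _ _ _),
          J.map_comp, Category.assoc, comp_post, MonoidalCategory.tensorHom_def',
          MonoidalCategory.tensorHom_def', Category.assoc, Category.assoc,
          ← whisker_exchange_assoc, ← whisker_exchange_assoc, ← whisker_exchange_assoc]
        rw [← whiskerLeft_comp_assoc, ← whiskerLeft_comp_assoc, Category.assoc, hG]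
        rw [whisker_exchange_assoc, whisker_exchange_assoc, pre_post_comp]
        simp only [← comp_whiskerRight_assoc]
        rw [hG] }
  refine ⟨GF, ⟨⟨⟨n, fun X Y => (nat_iff _ _ _ _).2 ?_⟩, ⟨e, fun X Y => (nat_iff _ _ _ _).2 ?_⟩,
    hn', fun Y => ?_⟩⟩⟩
  · refine (Category.id_comp _).trans (Eq.trans ?_ (Category.assoc _ _ _).symm)
    change postcompV V X (n Y) = J.map X Y ≫ Gm (J.obj X) (J.obj Y) ≫ precompV V (n X) _
    apply canc
    rw [← Category.assoc, ← map_post, Category.assoc, ← post_comp, hn', post_id,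
      Category.comp_id, Category.assoc, Category.assoc, ← Category.assoc (precompV _ _ _),
      ← map_pre, Category.assoc, pre_post, ← Category.assoc (J.map _ _) (postcompV _ _ _),
      ← Category.assoc (Gm _ _), hG, ← pre_comp, hn', pre_id, Category.comp_id]
  · refine (Category.assoc _ _ _).trans (Eq.trans ?_ (Category.id_comp _).symm)
    exact hG X Y
  · change vcomp V (n (G Y)) (e Y ≫ Gm _ _) = eId V (G Y)
    apply canc
    rw [← elem_pre, Category.assoc, Category.assoc, ← Category.assoc (precompV _ _ _),
      ← map_pre, Category.assoc, pre_post, ← Category.assoc (J.map _ _) (postcompV _ _ _),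
      ← Category.assoc (Gm _ _), hG, ← pre_comp, hn', pre_id, Category.comp_id,
      ← Category.assoc, J.map_id, elem_post, id_vcomp]

end Adj

section Fork

variable {V : Type u} [Category.{v} V]

/-- Transport of equalizer forks along isomorphisms. -/
lemma fork_transport {P X Y P' X' Y' : V} {i : P ⟶ X} {f g : X ⟶ Y} {w : i ≫ f = i ≫ g}
    (h : Nonempty (IsLimit (Fork.ofι i w))) {i' : P' ⟶ X'} {f' g' : X' ⟶ Y'}
    (p : P' ≅ P) (x : X' ≅ X) (y : Y' ≅ Y) (hi : i' ≫ x.hom = p.hom ≫ i)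
    (hf : f' ≫ y.hom = x.hom ≫ f) (hg : g' ≫ y.hom = x.hom ≫ g) :
    ∃ w' : i' ≫ g' = i' ≫ f', Nonempty (IsLimit (Fork.ofι i' w')) := by
  obtain ⟨h⟩ := h
  have w' : i' ≫ g' = i' ≫ f' := by
    rw [← cancel_mono y.hom, Category.assoc, Category.assoc, hf, hg, ← Category.assoc,
      ← Category.assoc, hi, Category.assoc, Category.assoc, w]
  have hi' : i' = p.hom ≫ i ≫ x.inv := by
    rw [← Category.assoc, ← hi, Category.assoc, x.hom_inv_id, Category.comp_id]
  have hm : Mono i := mono_of_isLimit_fork h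
  refine ⟨w', ⟨Fork.IsLimit.mk' _ fun s => ?_⟩⟩
  have hs : (s.ι ≫ x.hom) ≫ f = (s.ι ≫ x.hom) ≫ g := by
    rw [Category.assoc, Category.assoc, ← hf, ← hg, ← Category.assoc, ← s.condition,
      Category.assoc]
  refine ⟨Fork.IsLimit.lift h _ hs ≫ p.inv, ?_, ?_⟩
  · have := Fork.IsLimit.lift_ι' h _ hs
    simp only [Fork.ι_ofι] at this
    change (Fork.IsLimit.lift h _ hs ≫ p.inv) ≫ i' = s.ι
    conv_lhs => rw [hi']
    rw [Category.assoc, p.inv_hom_id_assoc, ← Category.assoc, this, Category.assoc,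
      x.hom_inv_id, Category.comp_id]
  · intro m hm
    simp only [Fork.ι_ofι] at hm
    have := Fork.IsLimit.lift_ι' h _ hs
    simp only [Fork.ι_ofι] at this
    rw [← cancel_mono p.hom, ← cancel_mono i, Category.assoc, Category.assoc, Category.assoc,
      p.inv_hom_id_assoc, this, ← hi, ← Category.assoc, hm]

lemma isIso_of_forks {P P' X Y : V} {i : P ⟶ X} {i' : P' ⟶ X} {f g : X ⟶ Y}
    {w : i ≫ f = i ≫ g} {w' : i' ≫ f = i' ≫ g} (h : IsLimit (Fork.ofι i w))
    (h' : IsLimit (Fork.ofι i' w')) (k : P ⟶ P') (hk : k ≫ i' = i) : IsIso k := by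
  have hm : Mono i := mono_of_isLimit_fork h
  have hm' : Mono i' := mono_of_isLimit_fork h'
  have h1 := Fork.IsLimit.lift_ι' h i' w'
  simp only [Fork.ι_ofι] at h1
  refine ⟨Fork.IsLimit.lift h i' w', ?_, ?_⟩
  · rw [← cancel_mono i, Category.assoc, h1, hk, Category.id_comp]
  · rw [← cancel_mono i', Category.assoc, hk, h1, Category.id_comp]

end Fork

section Main

variable {V : Type u} [Category.{v} V] [MonoidalCategory V]
variable {A : Type u₁} [EnrichedCategory V A] {B : Type u₂} [EnrichedCategory V B]
  {C : Type u₃} [EnrichedCategory V C]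
  (J : EnrichedFunctor V A B) (L : EnrichedFunctor V B C) (R : EnrichedFunctor V C A)
  (U : EnrichedFunctor V C B)
  (adj1 : VAdjunction V (EnrichedFunctor.comp V J L) R) (adj2 : VAdjunction V L U)

/-- `θ` for the composite adjunction, with unfolded types. -/
def θE (X : A) (Z : C) : ((X ⟶[V] R.obj Z) : V) ≅ (L.obj (J.obj X) ⟶[V] Z) := θ adj1 X Z

/-- The unit of the composite adjunction, with unfolded types. -/
def ρE (X : A) : EHom V X (R.obj (L.obj (J.obj X))) := adj1.η.app X

/-- The counit of the composite adjunction, with unfolded types. -/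
def μE (Z : C) : EHom V (L.obj (J.obj (R.obj Z))) Z := adj1.ε.app Z

lemma θE_hom (X : A) (Z : C) : (θE J L R adj1 X Z).hom =
    J.map X (R.obj Z) ≫ L.map (J.obj X) (J.obj (R.obj Z)) ≫
      postcompV V (L.obj (J.obj X)) (μE J L R adj1 Z) :=
  Category.assoc _ _ _

lemma ρE_comp_θE (W X : A) {Z : C} (w : EHom V (L.obj (J.obj X)) Z) :
    postcompV V W (vcomp V (ρE J L R adj1 X) (w ≫ R.map (L.obj (J.obj X)) Z)) ≫
        (θE J L R adj1 W Z).hom =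
      J.map W X ≫ L.map (J.obj W) (J.obj X) ≫ postcompV V (L.obj (J.obj W)) w :=
  (post_η_comp_θ adj1 W X w).trans (Category.assoc _ _ _)

lemma q_θ (X : A) (Y : B) :
    postcompV V X (qY V L R U adj2 Y) ≫ (θE J L R adj1 X _).hom =
      (θE J L R adj1 X _).hom ≫ parallelFst V J L U adj2 X Y :=
  post_θ adj1 X _

lemma r_θ (X : A) (Y : B) :
    postcompV V X (rY V J L R U adj1 adj2 Y) ≫ (θE J L R adj1 X _).hom =
      (θE J L R adj1 X _).hom ≫ parallelSnd V J L U adj2 X Y := by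
  have h2 : rY V J L R U adj1 adj2 Y = vcomp V (ρE J L R adj1 (R.obj (L.obj Y)))
      (((vcomp V (un adj2 (J.obj (R.obj (L.obj Y))))
        (μE J L R adj1 (L.obj Y) ≫ U.map _ (L.obj Y))) ≫ L.map _ _) ≫ R.map _ _) := by
    rw [Category.assoc]
    rfl
  have h3 : parallelSnd V J L U adj2 X Y = U.map (L.obj (J.obj X)) (L.obj Y) ≫
    precompV V (un adj2 (J.obj X)) (U.obj (L.obj Y)) ≫ L.map (J.obj X) (U.obj (L.obj Y)) := rfl
  rw [h2, ρE_comp_θE, map_post, post_comp, θE_hom, h3, η_nat]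
  simp only [Category.assoc]
  rw [← Category.assoc (postcompV V (L.obj (J.obj X)) (μE J L R adj1 (L.obj Y))),
    ← map_post U (L.obj (J.obj X)), ← Category.assoc (precompV _ _ _), pre_post]
  simp only [Category.assoc]

end Main


/-- **Enriched Adjoint Triangle Theorem** (Proposition 1.1 of "On Biadjoint Triangles").

Let `(L ⊣ U, η, ε) : 𝔅 → ℭ` and `(E ⊣ R, ρ, μ) : 𝔄 → ℭ` (with `E = L ∘ J`) be
`V`-adjunctions.  Assume that for all `A, Y` the diagram
`𝔅(JA, Y) → ℭ(EA, LY) ⇉ ℭ(EA, LULY)` is an equalizer in `V`.  Then `J` has a right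
`V`-adjoint iff for every `Y` the `V`-equalizer of
`RL(U(μ_{LY})η_{JRLY})ρ_{RLY}, RL(η_Y) : RLY ⇉ RLULY` exists in `𝔄`; and in that case
the value `G Y` of any right `V`-adjoint is given by this `V`-equalizer. -/
theorem enriched_adjoint_triangle
    (V : Type u) [Category.{v} V] [MonoidalCategory V] [SymmetricCategory V]
    [MonoidalClosed V] [HasLimits V] [HasColimits V]
    {A : Type u₁} [EnrichedCategory V A] {B : Type u₂} [EnrichedCategory V B]
    {C : Type u₃} [EnrichedCategory V C]
    (J : EnrichedFunctor V A B) (L : EnrichedFunctor V B C) (R : EnrichedFunctor V C A)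
    (U : EnrichedFunctor V C B)
    (adj1 : VAdjunction V (EnrichedFunctor.comp V J L) R) (adj2 : VAdjunction V L U)
    (hw : ∀ (A' : A) (Y : B),
      L.map (J.obj A') Y ≫ parallelFst V J L U adj2 A' Y =
        L.map (J.obj A') Y ≫ parallelSnd V J L U adj2 A' Y)
    (heq : ∀ (A' : A) (Y : B),
      Nonempty (IsLimit (Fork.ofι (L.map (J.obj A') Y) (hw A' Y)))) :
    ((∃ G : EnrichedFunctor V B A, Nonempty (VAdjunction V J G)) ↔
      ∀ Y : B, HasVEqualizer V (rY V J L R U adj1 adj2 Y) (qY V L R U adj2 Y)) ∧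
    (∀ (G : EnrichedFunctor V B A), VAdjunction V J G → ∀ Y : B,
      ∃ i, IsVEqualizer V (rY V J L R U adj1 adj2 Y) (qY V L R U adj2 Y) (G.obj Y) i) := by
  have part2 : ∀ (G : EnrichedFunctor V B A), VAdjunction V J G → ∀ Y : B,
      ∃ i, IsVEqualizer V (rY V J L R U adj1 adj2 Y) (qY V L R U adj2 Y) (G.obj Y) i := by
    intro G adj Y
    let i : EHom V (G.obj Y) (R.obj (L.obj Y)) :=
      vcomp V (ρE J L R adj1 (G.obj Y)) ((co adj Y ≫ L.map _ Y) ≫ R.map _ _)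
    have hi : ∀ W, postcompV V W i ≫ (θE J L R adj1 W (L.obj Y)).hom =
        (θ adj W Y).hom ≫ L.map (J.obj W) Y := by
      intro W
      rw [ρE_comp_θE, θ_hom, map_post, Category.assoc]
    have key := fun W => fork_transport (heq W Y) (θ adj W Y) (θE J L R adj1 W (L.obj Y))
      (θE J L R adj1 W _) (hi W) (q_θ J L R U adj1 adj2 W Y) (r_θ J L R U adj1 adj2 W Y)
    exact ⟨i, fun W => (key W).1, fun W => (key W).2⟩
  refine ⟨⟨fun ⟨G, ⟨adj⟩⟩ Y => ⟨G.obj Y, part2 G adj Y⟩, fun H => ?_⟩, part2⟩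
  choose G i hi using H
  have key := fun W Y => fork_transport ((hi Y).isLimit W)
    (i' := postcompV V W (i Y) ≫ (θE J L R adj1 W (L.obj Y)).hom)
    (f' := parallelSnd V J L U adj2 W Y) (g' := parallelFst V J L U adj2 W Y)
    (Iso.refl _) (θE J L R adj1 W (L.obj Y)).symm (θE J L R adj1 W _).symm
    (by simp)
    (by
      rw [Iso.symm_hom, Iso.symm_hom, Iso.comp_inv_eq, Category.assoc, r_θ, Iso.inv_hom_id_assoc])
    (by
      rw [Iso.symm_hom, Iso.symm_hom, Iso.comp_inv_eq, Category.assoc, q_θ, Iso.inv_hom_id_assoc])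
  have hii : ∀ Y, i Y = eId V (G Y) ≫ postcompV V (G Y) (i Y) := fun Y => by
    rw [elem_post, id_vcomp]
  have he : ∀ Y, ∃ e : EHom V (J.obj (G Y)) Y,
      e ≫ L.map (J.obj (G Y)) Y = i Y ≫ (θE J L R adj1 (G Y) (L.obj Y)).hom := by
    intro Y
    obtain ⟨hl⟩ := heq (G Y) Y
    obtain ⟨w, -⟩ := key (G Y) Y
    have w2 : (i Y ≫ (θE J L R adj1 (G Y) (L.obj Y)).hom) ≫ parallelFst V J L U adj2 (G Y) Y =
        (i Y ≫ (θE J L R adj1 (G Y) (L.obj Y)).hom) ≫ parallelSnd V J L U adj2 (G Y) Y := by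
      rw [hii Y, Category.assoc (eId V (G Y)), Category.assoc (eId V (G Y)), w,
        Category.assoc (eId V (G Y))]
    exact ⟨Fork.IsLimit.lift hl _ w2, Fork.IsLimit.lift_ι' hl _ w2⟩
  choose e he using he
  refine exists_right_adjoint J G e fun X Y => ?_
  obtain ⟨w, ⟨hk⟩⟩ := key X Y
  obtain ⟨hl⟩ := heq X Y
  refine isIso_of_forks hk hl _ ?_
  rw [Category.assoc, ← map_post, he, θE_hom, θE_hom, ← Category.assoc (i Y),
    ← Category.assoc (i Y ≫ _), elem_post, post_comp, ← Category.assoc (L.map _ _), map_post,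
    ← Category.assoc, ← Category.assoc, map_post]
  simp only [Category.assoc]

end EnrichedAdjointTriangles
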